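/- Let X = ℓ∞³, Y = ℓ₁³, and let T : X → Y be a bounded linear operator with ‖T‖ = 1 such that M_T ∩ Ext(B_X) = {±x₁, ±x₂, ±x₃, ±x₄}. Suppose |S₁| = 4, |S₂| = 4 and |S₃| = 0. If it is NOT the case that both ±J(Tx_i) = ±J(Tx_j) for all x_i, x_j ∈ S₁ and ±J(Tx_i) ⊆ ±Ext J(Tx_k) for all x_i ∈ S₁, x_k ∈ S₂, then T is 6-smooth, i.e., dim span J(T) = 6. -/

import Mathlib

open Metric Set Module Pointwise

noncomputable section

/-- `J x` is the set of supporting functionals of `x`. -/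
def suppFunctionals {E : Type*} [NormedAddCommGroup E] [NormedSpace ℝ E] (x : E) :
    Set (E →L[ℝ] ℝ) := {f | ‖f‖ = 1 ∧ f x = 1}

/-- ℓ∞³ : ℝ³ with the max norm. -/
abbrev Linf3 := Fin 3 → ℝ

/-- ℓ₁³ : ℝ³ with the ℓ¹ norm. -/
abbrev L13 := PiLp 1 (fun _ : Fin 3 => ℝ)

def x₁ : Linf3 := ![1, 1, 1]
def x₂ : Linf3 := ![-1, 1, 1]
def x₃ : Linf3 := ![-1, -1, 1]
def x₄ : Linf3 := ![1, -1, 1]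

/-- `M_T ∩ Ext(B_X)`: the norm-attainment set of `T` intersected with the
extreme points of the closed unit ball. -/
def MTExt (T : Linf3 →L[ℝ] L13) : Set Linf3 :=
  {x ∈ sphere (0 : Linf3) 1 | ‖T x‖ = ‖T‖} ∩ extremePoints ℝ (closedBall (0 : Linf3) 1)

/-- `Sk T k` is the set `S_k` of points `x` of `M_T ∩ Ext(B_X)` such that `T x` is
`k`-smooth. -/
def Sk (T : Linf3 →L[ℝ] L13) (k : ℕ) : Set Linf3 :=
  {x ∈ MTExt T | finrank ℝ (Submodule.span ℝ (suppFunctionals (T x))) = k}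

/-- `±A`, i.e. `A ∪ (-A)`. -/
def pm {E : Type*} [NormedAddCommGroup E] [NormedSpace ℝ E] (A : Set (E →L[ℝ] ℝ)) :
    Set (E →L[ℝ] ℝ) := A ∪ (-A)

/-- Polyhedral norm: the span of the support functionals is the span of the active ones. -/
lemma span_supp {E ι : Type*} [NormedAddCommGroup E] [NormedSpace ℝ E] [Finite ι]
    (φ : ι → (E →L[ℝ] ℝ)) (hle : ∀ i A, φ i A ≤ ‖A‖) (hex : ∀ A, ∃ i, ‖A‖ ≤ φ i A)
    (T : E) (hT : ‖T‖ = 1) :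
    Submodule.span ℝ (suppFunctionals T) = Submodule.span ℝ {f | ∃ i, φ i T = 1 ∧ f = φ i} := by
  apply le_antisymm
  · rw [Submodule.span_le]
    rintro F ⟨hF, hFT⟩
    have key : ∀ A : E, (∀ i, φ i T = 1 → φ i A = 0) → F A ≤ 0 := by
      intro A hA
      -- small ε
      have hev : ∀ᶠ ε in nhdsWithin (0:ℝ) (Set.Ioi 0), ∀ i, φ i T + ε * φ i A ≤ 1 := by
        rw [Filter.eventually_all]
        intro i
        by_cases h : φ i T = 1
        · exact Filter.Eventually.of_forall fun ε => by rw [h, hA i h]; simp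
        · have hlt : φ i T < 1 := lt_of_le_of_ne (hT ▸ hle i T) h
          have hc : Continuous fun ε : ℝ => φ i T + ε * φ i A := by fun_prop
          have := (hc.tendsto 0).eventually (Iio_mem_nhds (show φ i T + 0 * φ i A < 1 by simpa using hlt))
          exact (this.filter_mono nhdsWithin_le_nhds).mono fun _ h => le_of_lt h
      obtain ⟨ε, hε, hpos⟩ := (hev.and self_mem_nhdsWithin).exists
      have hpos : 0 < ε := hpos
      obtain ⟨i, hi⟩ := hex (T + ε • A)
      have h1 : ‖T + ε • A‖ ≤ 1 := by
        refine hi.trans ?_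
        simpa using hε i
      have h2 : F (T + ε • A) ≤ 1 := by
        calc F (T + ε • A) ≤ ‖F (T + ε • A)‖ := Real.le_norm_self _
          _ ≤ ‖F‖ * ‖T + ε • A‖ := F.le_opNorm _
          _ ≤ 1 := by rw [hF]; linarith
      simp only [map_add, map_smul, smul_eq_mul, hFT] at h2
      by_contra hcon
      push Not at hcon
      have := mul_pos hpos hcon
      linarith
    have hker : ∀ A : E, (∀ i, φ i T = 1 → φ i A = 0) → F A = 0 := by
      intro A hA
      have h1 := key A hA
      have h2 := key (-A) (fun i hi => by simp [hA i hi])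
      simp at h2
      linarith
    let K := {i // φ i T = 1}
    have hm : (F : E →ₗ[ℝ] ℝ) ∈ Submodule.span ℝ
        (Set.range fun i : K => ((φ i.1 : E →L[ℝ] ℝ) : E →ₗ[ℝ] ℝ)) := by
      apply mem_span_of_iInf_ker_le_ker
      intro A hA
      simp only [Submodule.mem_iInf, LinearMap.mem_ker] at hA
      exact hker A fun i hi => hA ⟨i, hi⟩
    have : Fintype K := Fintype.ofFinite K
    rw [Submodule.mem_span_range_iff_exists_fun] at hm
    obtain ⟨c, hc⟩ := hm
    have hFc : F = ∑ i : K, c i • φ i.1 := by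
      ext A
      have := LinearMap.congr_fun hc A
      simp at this
      simp [this]
    rw [hFc]
    exact Submodule.sum_mem _ fun i _ => Submodule.smul_mem _ _
      (Submodule.subset_span ⟨i.1, i.2, rfl⟩)
  · rw [Submodule.span_le]
    rintro _ ⟨i, hi, rfl⟩
    apply Submodule.subset_span
    refine ⟨le_antisymm ?_ ?_, hi⟩
    · apply ContinuousLinearMap.opNorm_le_bound _ zero_le_one
      intro A
      rw [one_mul, Real.norm_eq_abs, abs_le]
      have := hle i (-A)
      simp at this
      exact ⟨by linarith, hle i A⟩
    · have := (φ i).le_opNorm T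
      rw [hi, hT] at this
      simpa using this

def sg (b : Bool) : ℝ := if b then 1 else -1

lemma sg_cases (b : Bool) : sg b = 1 ∨ sg b = -1 := by cases b <;> simp [sg]

/-- Sign functional on ℓ₁³. -/
def sgf (s : Fin 3 → Bool) : L13 →L[ℝ] ℝ :=
  ∑ i, sg (s i) • (PiLp.proj 1 (fun _ : Fin 3 => ℝ) i : L13 →L[ℝ] ℝ)

lemma sgf_apply (s : Fin 3 → Bool) (y : L13) :
    sgf s y = sg (s 0) * y 0 + sg (s 1) * y 1 + sg (s 2) * y 2 := by
  simp [sgf, Fin.sum_univ_three]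

lemma norm_L13 (y : L13) : ‖y‖ = |y 0| + |y 1| + |y 2| := by
  simp [PiLp.norm_eq_of_nat (p := 1) 1 (by simp), Fin.sum_univ_three]

lemma sg_mul_le (b : Bool) (r : ℝ) : sg b * r ≤ |r| := by
  rcases sg_cases b with h | h <;> rw [h]
  · simpa using le_abs_self r
  · simpa using neg_le_abs r

lemma sg_mul_dec (r : ℝ) : sg (decide (0 ≤ r)) * r = |r| := by
  by_cases h : 0 ≤ r
  · simp [sg, h, abs_of_nonneg]
  · have h' : r < 0 := not_le.1 h
    simp [sg, h, abs_of_neg h']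

lemma sgf_le (s : Fin 3 → Bool) (y : L13) : sgf s y ≤ ‖y‖ := by
  rw [sgf_apply, norm_L13]
  linarith [sg_mul_le (s 0) (y 0), sg_mul_le (s 1) (y 1), sg_mul_le (s 2) (y 2)]

lemma sgf_ex (y : L13) : ∃ s, ‖y‖ ≤ sgf s y := by
  refine ⟨fun i => decide (0 ≤ y i), ?_⟩
  rw [sgf_apply, norm_L13]
  simp only [sg_mul_dec]
  exact le_rfl

def XX : Fin 4 → Linf3 := ![x₁, x₂, x₃, x₄]

/-- evaluation at x followed by y. -/
def tens (x : Linf3) : (L13 →L[ℝ] ℝ) →ₗ[ℝ] ((Linf3 →L[ℝ] L13) →L[ℝ] ℝ) where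
  toFun y := y.comp (ContinuousLinearMap.apply ℝ L13 x)
  map_add' _ _ := by ext; simp
  map_smul' _ _ := by ext; simp

lemma tens_apply (x : Linf3) (y) (A : Linf3 →L[ℝ] L13) : tens x y A = y (A x) := rfl

lemma norm_XX_le (i : Fin 4) : ‖XX i‖ ≤ 1 := by
  rw [pi_norm_le_iff_of_nonneg zero_le_one]
  intro j
  fin_cases i <;> fin_cases j <;> simp [XX, x₁, x₂, x₃, x₄]

lemma lin_bound (w : Linf3 →L[ℝ] ℝ) (M : ℝ) (hM : ∀ i, |w (XX i)| ≤ M) (x : Linf3) :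
    w x ≤ M * ‖x‖ := by
  have hdec : ∀ x : Linf3, w x = x 0 * w ![1,0,0] + x 1 * w ![0,1,0] + x 2 * w ![0,0,1] := by
    intro x
    have : x = x 0 • (![1,0,0] : Linf3) + x 1 • (![0,1,0] : Linf3) + x 2 • (![0,0,1] : Linf3) := by
      ext j; fin_cases j <;> simp
    conv_lhs => rw [this]
    simp only [map_add, map_smul, smul_eq_mul]
  have hx : ∀ j, |x j| ≤ ‖x‖ := fun j => norm_le_pi_norm x j
  have h0 := hM 0
  have h1 := hM 1
  have h2 := hM 2
  have h3 := hM 3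
  rw [hdec] at h0 h1 h2 h3
  rw [hdec]
  simp only [XX, x₁, x₂, x₃, x₄, Matrix.cons_val] at h0 h1 h2 h3
  generalize w ![1,0,0] = a at *
  generalize w ![0,1,0] = b at *
  generalize w ![0,0,1] = c at *
  rw [abs_le] at h0 h1 h2 h3
  have hs : |a| + |b| + |c| ≤ M := by
    rcases abs_cases a with h | h <;> rcases abs_cases b with h' | h' <;>
      rcases abs_cases c with h'' | h'' <;> rw [h.1, h'.1, h''.1] <;> linarith
  have hp : ∀ j (a : ℝ), x j * a ≤ ‖x‖ * |a| := fun j a =>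
    (le_abs_self _).trans (by rw [abs_mul]; exact mul_le_mul_of_nonneg_right (hx j) (abs_nonneg a))
  nlinarith [hp 0 a, hp 1 b, hp 2 c, mul_le_mul_of_nonneg_left hs (norm_nonneg x)]

lemma sgf_neg (s : Fin 3 → Bool) : sgf (fun i => !(s i)) = - sgf s := by
  ext y
  have : ∀ b, sg (!b) = - sg b := by intro b; cases b <;> simp [sg]
  simp only [neg_apply, sgf_apply, this]
  ring

lemma tens_le (p : Fin 4 × (Fin 3 → Bool)) (A : Linf3 →L[ℝ] L13) :
    tens (XX p.1) (sgf p.2) A ≤ ‖A‖ := by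
  rw [tens_apply]
  refine (sgf_le _ _).trans ((A.le_opNorm _).trans ?_)
  exact mul_le_of_le_one_right (norm_nonneg _) (norm_XX_le _)

lemma tens_ex (A : Linf3 →L[ℝ] L13) :
    ∃ p : Fin 4 × (Fin 3 → Bool), ‖A‖ ≤ tens (XX p.1) (sgf p.2) A := by
  obtain ⟨p, hp⟩ := Finite.exists_max
    fun p : Fin 4 × (Fin 3 → Bool) => tens (XX p.1) (sgf p.2) A
  refine ⟨p, ?_⟩
  set M := tens (XX p.1) (sgf p.2) A
  apply ContinuousLinearMap.opNorm_le_bound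
  · obtain ⟨s, hs⟩ := sgf_ex (A (XX 0))
    exact (norm_nonneg _).trans (hs.trans (hp (0, s)))
  · intro x
    obtain ⟨s, hs⟩ := sgf_ex (A x)
    refine hs.trans (lin_bound ((sgf s).comp A) M ?_ x)
    intro i
    rw [abs_le]
    have h1 := hp (i, s)
    have h2 := hp (i, fun i => !(s i))
    simp only [tens_apply, sgf_neg, neg_apply] at h1 h2
    simp only [ContinuousLinearMap.comp_apply]
    exact ⟨by linarith, h1⟩

lemma span_L13 (y : L13) (hy : ‖y‖ = 1) : Submodule.span ℝ (suppFunctionals y) =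
    Submodule.span ℝ {f | ∃ s, sgf s y = 1 ∧ f = sgf s} :=
  span_supp sgf sgf_le sgf_ex y hy

lemma norm_sgf (s : Fin 3 → Bool) (y : L13) (hy : ‖y‖ = 1) (h : sgf s y = 1) :
    sgf s ∈ suppFunctionals y := by
  refine ⟨le_antisymm ?_ ?_, h⟩
  · apply ContinuousLinearMap.opNorm_le_bound _ zero_le_one
    intro A
    rw [one_mul, Real.norm_eq_abs, abs_le]
    have := sgf_le s (-A)
    simp only [map_neg, norm_neg] at this
    exact ⟨by linarith, sgf_le s A⟩
  · have := (sgf s).le_opNorm y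
    rw [h, hy] at this
    simpa using this

lemma supp_neg {E : Type*} [NormedAddCommGroup E] [NormedSpace ℝ E] (y : E) :
    suppFunctionals (-y) = - suppFunctionals y := by
  ext f
  simp [suppFunctionals]

lemma span_supp_neg (y : L13) : Submodule.span ℝ (suppFunctionals (-y)) =
    Submodule.span ℝ (suppFunctionals y) := by
  rw [supp_neg, Submodule.span_neg]

def e3 (i : Fin 3) : L13 := WithLp.toLp 1 (Pi.single i 1)

lemma norm_e3 (i : Fin 3) : ‖e3 i‖ = 1 := by
  rw [norm_L13]; fin_cases i <;> simp [e3]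

lemma sgf_e3 (s : Fin 3 → Bool) (i : Fin 3) : sgf s (e3 i) = sg (s i) := by
  rw [sgf_apply]; fin_cases i <;> simp [e3]

lemma ext_e3 (f g : L13 →L[ℝ] ℝ) (h : ∀ i, f (e3 i) = g (e3 i)) : f = g := by
  ext y
  have : y = y 0 • e3 0 + y 1 • e3 1 + y 2 • e3 2 := by
    ext j; fin_cases j <;> simp [e3]
  rw [this]
  simp only [map_add, map_smul, h]

lemma sgf_extreme (s : Fin 3 → Bool) (y : L13) (hy : ‖y‖ = 1) (h : sgf s y = 1) :
    sgf s ∈ extremePoints ℝ (suppFunctionals y) := by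
  rw [mem_extremePoints_iff_left]
  refine ⟨norm_sgf s y hy h, ?_⟩
  rintro f hf g hg ⟨a, b, ha, hb, hab, heq⟩
  apply ext_e3
  intro i
  have hv := DFunLike.congr_fun heq (e3 i)
  simp only [add_apply, smul_apply, smul_eq_mul] at hv
  rw [sgf_e3] at hv ⊢
  have hf1 : |f (e3 i)| ≤ 1 := by
    have := f.le_opNorm (e3 i); rwa [hf.1, norm_e3, one_mul] at this
  have hg1 : |g (e3 i)| ≤ 1 := by
    have := g.le_opNorm (e3 i); rwa [hg.1, norm_e3, one_mul] at this
  rw [abs_le] at hf1 hg1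
  rcases sg_cases (s i) with h | h <;> rw [h] at hv ⊢ <;> nlinarith

lemma exists_active (y : L13) (hy : ‖y‖ = 1) : ∃ s, sgf s y = 1 := by
  obtain ⟨s, hs⟩ := sgf_ex y
  exact ⟨s, le_antisymm (hy ▸ sgf_le s y) (hy ▸ hs)⟩

/-- one-dimensional case -/
lemma one_dim (y : L13) (hy : ‖y‖ = 1)
    (hd : finrank ℝ (Submodule.span ℝ (suppFunctionals y)) = 1) (s) (hs : sgf s y = 1) :
    suppFunctionals y = {sgf s} ∧
      ∀ c ∈ Submodule.span ℝ (suppFunctionals y), ∃ a : ℝ, c = a • sgf s := by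
  have hm := norm_sgf s y hy hs
  have hall : ∀ c ∈ Submodule.span ℝ (suppFunctionals y), ∃ a : ℝ, c = a • sgf s := by
    intro c hc
    have hne : (⟨sgf s, Submodule.subset_span hm⟩ :
        Submodule.span ℝ (suppFunctionals y)) ≠ 0 := by
      intro h
      have h' := congrArg Subtype.val h
      simp only [ZeroMemClass.coe_zero] at h'
      rw [h'] at hs
      simp at hs
    have hd' := finrank_eq_one_iff_of_nonzero' (K := ℝ)
      (⟨sgf s, Submodule.subset_span hm⟩ : Submodule.span ℝ (suppFunctionals y)) hne
    obtain ⟨a, ha⟩ := hd'.1 hd ⟨c, hc⟩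
    exact ⟨a, (congrArg Subtype.val ha).symm⟩
  refine ⟨?_, hall⟩
  ext f
  constructor
  · intro hf
    obtain ⟨a, ha⟩ := hall f (Submodule.subset_span hf)
    have h1 := hf.2
    rw [ha] at h1
    simp [hs] at h1
    simp [ha, h1]
  · rintro rfl
    exact hm

lemma two_dim (y : L13) (hy : ‖y‖ = 1)
    (hd : finrank ℝ (Submodule.span ℝ (suppFunctionals y)) = 2) (r)
    (hr : sgf r ∈ Submodule.span ℝ (suppFunctionals y)) :
    sgf r ∈ pm (extremePoints ℝ (suppFunctionals y)) := by
  obtain ⟨s, hs⟩ := exists_active y hy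
  have hex : ∃ t, sgf t y = 1 ∧ sgf t ∉ Submodule.span ℝ {sgf s} := by
    by_contra hcon
    push Not at hcon
    have : Submodule.span ℝ (suppFunctionals y) ≤ Submodule.span ℝ {sgf s} := by
      rw [span_L13 y hy, Submodule.span_le]
      rintro _ ⟨t, ht, rfl⟩
      exact hcon t ht
    have h1 := Submodule.finrank_mono this
    have h2 := finrank_span_le_card (R := ℝ) ({sgf s} : Set (L13 →L[ℝ] ℝ))
    simp at h2
    omega
  obtain ⟨t, ht, hts⟩ := hex
  have hs0 : sgf s ≠ 0 := by intro h; rw [h] at hs; simp at hs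
  have hli : LinearIndependent ℝ ![sgf s, sgf t] := by
    rw [LinearIndependent.pair_iff' hs0]
    intro a ha
    exact hts (Submodule.mem_span_singleton.2 ⟨a, ha⟩)
  have hle : Submodule.span ℝ (Set.range ![sgf s, sgf t]) ≤
      Submodule.span ℝ (suppFunctionals y) := by
    rw [Submodule.span_le]
    rintro _ ⟨i, rfl⟩
    apply Submodule.subset_span
    fin_cases i
    · exact norm_sgf s y hy hs
    · exact norm_sgf t y hy ht
  have heq := Submodule.eq_of_le_of_finrank_eq hle (by rw [hd, finrank_span_eq_card hli]; simp)
  rw [← heq] at hr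
  simp only [Matrix.range_cons, Matrix.range_empty, Set.union_empty, Set.singleton_union,
    Submodule.mem_span_pair] at hr
  obtain ⟨a, b, hab⟩ := hr
  have hi : ∀ i, a * sg (s i) + b * sg (t i) = sg (r i) := by
    intro i
    have := DFunLike.congr_fun hab (e3 i)
    simpa [sgf_e3] using this
  have hdiff : ∃ i, sg (t i) = - sg (s i) := by
    by_contra hcon
    push Not at hcon
    have : t = s := by
      ext1 i
      have := hcon i
      revert this
      cases t i <;> cases s i <;> simp [sg]
    rw [this] at hts
    exact hts (Submodule.mem_span_singleton_self _)
  have hsame : ∃ i, sg (t i) = sg (s i) := by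
    by_contra hcon
    push Not at hcon
    have : t = fun i => !(s i) := by
      ext1 i
      have := hcon i
      revert this
      cases t i <;> cases s i <;> simp [sg]
    rw [this, sgf_neg, neg_apply, hs] at ht
    norm_num at ht
  obtain ⟨i, hid⟩ := hdiff
  obtain ⟨j, hjd⟩ := hsame
  have h1 := hi i
  have h2 := hi j
  rw [hid] at h1
  rw [hjd] at h2
  have hcases : (a = 1 ∧ b = 0) ∨ (a = -1 ∧ b = 0) ∨ (a = 0 ∧ b = 1) ∨ (a = 0 ∧ b = -1) := by
    rcases sg_cases (s i) with h | h <;> rcases sg_cases (s j) with h' | h' <;>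
    rcases sg_cases (r i) with h'' | h'' <;> rcases sg_cases (r j) with h3 | h3 <;>
    rw [h, h''] at h1 <;> rw [h', h3] at h2 <;>
    first
    | exact Or.inl ⟨by linarith, by linarith⟩
    | exact Or.inr (Or.inl ⟨by linarith, by linarith⟩)
    | exact Or.inr (Or.inr (Or.inl ⟨by linarith, by linarith⟩))
    | exact Or.inr (Or.inr (Or.inr ⟨by linarith, by linarith⟩))
  have es := sgf_extreme s y hy hs
  have et := sgf_extreme t y hy ht
  rw [← hab]
  rcases hcases with ⟨rfl, rfl⟩ | ⟨rfl, rfl⟩ | ⟨rfl, rfl⟩ | ⟨rfl, rfl⟩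
  · left; simpa using es
  · right; simpa using es
  · left; simpa using et
  · right; simpa using et

def pt (p : Fin 4 × Bool) : Linf3 := sg p.2 • XX p.1

lemma pt_inj : Function.Injective pt := by
  rintro ⟨i, b⟩ ⟨j, c⟩ h
  have h0 := congrFun h 0
  have h1 := congrFun h 1
  have h2 := congrFun h 2
  clear h
  revert h0 h1 h2
  fin_cases i <;> fin_cases j <;> cases b <;> cases c <;>
    simp [pt, sg, XX, x₁, x₂, x₃, x₄] <;> norm_num

lemma range_pt : Set.range pt = {x₁, -x₁, x₂, -x₂, x₃, -x₃, x₄, -x₄} := by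
  ext x
  simp only [Set.mem_range, Prod.exists, Bool.exists_bool, Fin.exists_fin_succ, pt, sg, XX,
    Set.mem_insert_iff, Set.mem_singleton_iff]
  simp [eq_comm]
  tauto

/-- dimension of the span of the support functionals at `T (XX i)` -/
def dd (T : Linf3 →L[ℝ] L13) (i : Fin 4) : ℕ :=
  finrank ℝ (Submodule.span ℝ (suppFunctionals (T (XX i))))

lemma span_pt (T : Linf3 →L[ℝ] L13) (p : Fin 4 × Bool) :
    Submodule.span ℝ (suppFunctionals (T (pt p))) =
      Submodule.span ℝ (suppFunctionals (T (XX p.1))) := by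
  obtain ⟨i, b⟩ := p
  cases b
  · simp [pt, sg, span_supp_neg]
  · simp [pt, sg]

lemma card_Sk (T : Linf3 →L[ℝ] L13)
    (hMT : MTExt T = {x₁, -x₁, x₂, -x₂, x₃, -x₃, x₄, -x₄}) (k : ℕ)
    (h : (Sk T k).encard = 4) :
    (if dd T 0 = k then 1 else 0) + (if dd T 1 = k then 1 else 0) +
    (if dd T 2 = k then 1 else 0) + (if dd T 3 = k then 1 else 0) = 2 := by
  have hS : Sk T k = pt '' ((Finset.univ.filter fun i => dd T i = k) ×ˢ
      (Finset.univ : Finset Bool) : Finset (Fin 4 × Bool)) := by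
    ext x
    simp only [Sk, hMT, ← range_pt, Set.mem_ofPred_eq, Set.mem_range, Set.mem_image]
    constructor
    · rintro ⟨⟨p, rfl⟩, hp⟩
      refine ⟨p, ?_, rfl⟩
      rw [span_pt] at hp
      have hp' : dd T p.1 = k := hp
      simp [hp']
    · rintro ⟨p, hp, rfl⟩
      refine ⟨⟨p, rfl⟩, ?_⟩
      rw [span_pt]
      have hp' : dd T p.1 = k := by simpa using hp
      exact hp'
  rw [hS, pt_inj.encard_image, Set.encard_coe_eq_coe_finsetCard, Finset.card_product,
    Finset.card_filter, Fin.sum_univ_four] at h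
  simp only [Finset.card_univ, Fintype.card_bool] at h
  norm_cast at h
  omega

lemma sum_dd (T : Linf3 →L[ℝ] L13)
    (hMT : MTExt T = {x₁, -x₁, x₂, -x₂, x₃, -x₃, x₄, -x₄})
    (h1 : (Sk T 1).encard = 4) (h2 : (Sk T 2).encard = 4) :
    dd T 0 + dd T 1 + dd T 2 + dd T 3 = 6 := by
  have a := card_Sk T hMT 1 h1
  have b := card_Sk T hMT 2 h2
  split_ifs at a b <;> omega

/-- A relation among the elementary functionals forces a common vector. -/
lemma relation (y : Fin 4 → (L13 →L[ℝ] ℝ)) (h : ∑ i, tens (XX i) (y i) = 0) :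
    y 1 = - y 0 ∧ y 2 = y 0 ∧ y 3 = - y 0 := by
  have key : ∀ (j : Fin 3) (v : L13), ∑ i, XX i j * y i v = 0 := by
    intro j v
    have := DFunLike.congr_fun h
      ((ContinuousLinearMap.proj j : Linf3 →L[ℝ] ℝ).smulRight v)
    simpa [tens_apply, sum_apply] using this
  have k0 := key 0
  have k1 := key 1
  have k2 := key 2
  simp [Fin.sum_univ_four, XX, x₁, x₂, x₃, x₄] at k0 k1 k2
  refine ⟨?_, ?_, ?_⟩ <;> ext v <;> have := k0 v <;> have := k1 v <;> have := k2 v <;>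
    (try rw [neg_apply]) <;> linarith

theorem stmt_14
    (T : Linf3 →L[ℝ] L13) (hT : ‖T‖ = 1)
    (hMT : MTExt T = {x₁, -x₁, x₂, -x₂, x₃, -x₃, x₄, -x₄})
    (h1 : (Sk T 1).encard = 4) (h2 : (Sk T 2).encard = 4)
    (h3 : (Sk T 3).encard = 0)
    (hJ : ¬ ((∀ xi ∈ Sk T 1, ∀ xj ∈ Sk T 1,
        pm (suppFunctionals (T xi)) = pm (suppFunctionals (T xj))) ∧
      (∀ xi ∈ Sk T 1, ∀ xk ∈ Sk T 2,
        pm (suppFunctionals (T xi)) ⊆ pm (extremePoints ℝ (suppFunctionals (T xk))))))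
    :
    finrank ℝ (Submodule.span ℝ (suppFunctionals T)) = 6 := by
  have hn : ∀ x ∈ MTExt T, ‖T x‖ = 1 := fun x hx => hx.1.2.trans hT
  have hpt : ∀ p, pt p ∈ MTExt T := fun p => by
    rw [hMT, ← range_pt]; exact ⟨p, rfl⟩
  have hXX : ∀ i, ‖T (XX i)‖ = 1 := fun i => by
    have := hn _ (hpt (i, true))
    simpa [pt, sg] using this
  let V : Fin 4 → Submodule ℝ (L13 →L[ℝ] ℝ) :=
    fun i => Submodule.span ℝ (suppFunctionals (T (XX i)))
  -- a common nonzero vector is impossible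
  have hcommon : ∀ c : L13 →L[ℝ] ℝ, (∀ i, c ∈ V i) → c = 0 := by
    intro c hc
    by_contra hc0
    apply hJ
    have hcV : ∀ x ∈ MTExt T, c ∈ Submodule.span ℝ (suppFunctionals (T x)) := by
      intro x hx
      rw [hMT, ← range_pt] at hx
      obtain ⟨p, rfl⟩ := hx
      rw [span_pt]
      exact hc p.1
    have hone : ∀ x ∈ Sk T 1, ∃ s, ∃ a : ℝ, a ≠ 0 ∧ suppFunctionals (T x) = {sgf s} ∧
        c = a • sgf s := by
      intro x hx
      obtain ⟨s, hs⟩ := exists_active _ (hn x hx.1)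
      obtain ⟨hJ1, hall⟩ := one_dim _ (hn x hx.1) hx.2 s hs
      obtain ⟨a, ha⟩ := hall c (hcV x hx.1)
      refine ⟨s, a, ?_, hJ1, ha⟩
      rintro rfl
      simp at ha
      exact hc0 ha
    constructor
    · intro xi hxi xj hxj
      obtain ⟨s, a, ha, hs, hca⟩ := hone xi hxi
      obtain ⟨t, b, hb, ht, hcb⟩ := hone xj hxj
      have hst : sgf s = sgf t ∨ sgf s = - sgf t := by
        have hv : ∀ i, a * sg (s i) = b * sg (t i) := by
          intro i
          have := DFunLike.congr_fun (hca.symm.trans hcb) (e3 i)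
          simpa [sgf_e3] using this
        have hab : a = b ∨ a = -b := by
          have := hv 0
          rcases sg_cases (s 0) with h | h <;> rcases sg_cases (t 0) with h' | h' <;>
            rw [h, h'] at this
          · left; linarith
          · right; linarith
          · right; linarith
          · left; linarith
        rcases hab with rfl | rfl
        · left
          exact smul_right_injective _ ha (hca.symm.trans hcb)
        · right
          apply smul_right_injective _ ha
          simp only [smul_neg, neg_smul, neg_neg]
          rw [← hcb, hca]
          ext v
          simp
      rw [hs, ht]
      rcases hst with h | h <;> rw [h]
      simp [pm, Set.union_comm]
    · intro xi hxi xk hxk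
      obtain ⟨s, a, ha, hs, hca⟩ := hone xi hxi
      have hmem : sgf s ∈ Submodule.span ℝ (suppFunctionals (T xk)) := by
        have := Submodule.smul_mem _ a⁻¹ (hcV xk hxk.1)
        rwa [hca, smul_smul, inv_mul_cancel₀ ha, one_smul] at this
      have h := two_dim _ (hn xk hxk.1) hxk.2 s hmem
      rw [hs]
      rintro f (hf | hf)
      · rw [Set.mem_singleton_iff.1 hf]; exact h
      · have hf' : f = - sgf s := by
          rw [Set.mem_neg, Set.mem_singleton_iff] at hf
          rw [← hf, neg_neg]
        rw [hf']
        rcases h with h | h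
        · right; simpa using h
        · left; simpa using h
  let Ψ : (∀ i, V i) →ₗ[ℝ] ((Linf3 →L[ℝ] L13) →L[ℝ] ℝ) :=
    ∑ i, (tens (XX i)).comp ((V i).subtype.comp (LinearMap.proj i))
  have hΨ : ∀ y, Ψ y = ∑ i, tens (XX i) (y i : L13 →L[ℝ] ℝ) := fun y => by
    simp [Ψ]
  have haux : ∀ w : Fin 4 → (L13 →L[ℝ] ℝ), (∀ i, w i ∈ V i) →
      ∑ i, tens (XX i) (w i) = 0 → ∀ i, w i = 0 := by
    intro w hw hs
    obtain ⟨r1, r2, r3⟩ := relation w hs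
    have m1 : w 0 ∈ V 1 := by
      have := (V 1).neg_mem (hw 1)
      rwa [r1, neg_neg] at this
    have m2 : w 0 ∈ V 2 := r2 ▸ hw 2
    have m3 : w 0 ∈ V 3 := by
      have := (V 3).neg_mem (hw 3)
      rwa [r3, neg_neg] at this
    have h0 : w 0 = 0 := hcommon _ fun i => by
      fin_cases i
      · exact hw 0
      · exact m1
      · exact m2
      · exact m3
    rw [h0] at r1 r2 r3
    rw [neg_zero] at r1 r3
    intro i
    fin_cases i
    · exact h0
    · exact r1
    · exact r2
    · exact r3
  have hinj : Function.Injective Ψ := by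
    intro y z hyz
    have hd : ∑ i, tens (XX i) ((y i : L13 →L[ℝ] ℝ) - z i) = 0 := by
      rw [hΨ, hΨ] at hyz
      simp only [map_sub, Finset.sum_sub_distrib, hyz, sub_self]
    have hm : ∀ i, ((y i : L13 →L[ℝ] ℝ) - z i) ∈ V i := fun i => (V i).sub_mem (y i).2 (z i).2
    have hz : ∀ i, ((y i : L13 →L[ℝ] ℝ) - z i) = 0 := by
      exact haux _ hm hd
    funext i
    exact Subtype.ext (sub_eq_zero.1 (hz i))
  have hrange : Submodule.span ℝ (suppFunctionals T) = LinearMap.range Ψ := by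
    rw [span_supp (fun p : Fin 4 × (Fin 3 → Bool) => tens (XX p.1) (sgf p.2)) tens_le tens_ex T hT]
    apply le_antisymm
    · rw [Submodule.span_le]
      rintro _ ⟨⟨i, s⟩, h, rfl⟩
      have hm : sgf s ∈ V i := Submodule.subset_span (norm_sgf s _ (hXX i) h)
      refine ⟨Pi.single i ⟨sgf s, hm⟩, ?_⟩
      rw [hΨ, Finset.sum_eq_single i]
      · simp
      · intro j _ hj
        simp [Pi.single_eq_of_ne hj]
      · simp
    · rintro _ ⟨y, rfl⟩
      rw [hΨ]
      refine Submodule.sum_mem _ fun i _ => ?_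
      have hle : V i ≤ Submodule.comap (tens (XX i)) (Submodule.span ℝ {f | ∃ p :
          Fin 4 × (Fin 3 → Bool), tens (XX p.1) (sgf p.2) T = 1 ∧
            f = tens (XX p.1) (sgf p.2)}) := by
        simp only [V]
        rw [span_L13 _ (hXX i), Submodule.span_le]
        rintro _ ⟨s, hs, rfl⟩
        exact Submodule.subset_span ⟨(i, s), hs, rfl⟩
      exact hle (y i).2
  have : ∀ i, Module.Free ℝ (V i) := fun i => Module.Free.of_divisionRing ℝ (V i)
  rw [hrange, LinearMap.finrank_range_of_inj hinj, Module.finrank_pi_fintype, Fin.sum_univ_four]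
  exact sum_dd T hMT h1 h2
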